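/- Let v be a radial weight in the class D̂ satisfying ∫₀¹ (1-s)²/v̂(s) ds < ∞ and M₁(v) = sup_{0<r<1} (∫_r¹ v̂(s)/(1-s)² ds)^{1/2} (∫₀^r 1/v̂(s) ds)^{1/2} < ∞. If there exists K > 0 such that for every measurable φ : [0,1) → ℂ with ‖φ‖_{L²_{V̂₂}} < ∞ the function H(φ)(z) = ∫₀¹ φ(t)/(1-tz) dt satisfies ‖H(φ)‖_{D_v} ≤ K · ‖φ‖_{L²_{V̂₂}}, then M₂(v) = sup_{0<r<1} (∫₀^r v̂(s)/(1-s)⁴ ds)^{1/2} (∫_r¹ (1-s)²/v̂(s) ds)^{1/2} < ∞; moreover M₂(v) ≤ C · M₁(v) · K for a constant C depending only on v. -/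

import Mathlib

open MeasureTheory Real Set Filter

noncomputable section

/-- `hatw v r = ∫_r^1 v(s) ds`. -/
def hatw (v : ℝ → ℝ) (r : ℝ) : ℝ := ∫ s in r..1, v s

/-- A radial weight: measurable, positive on `[0,1)`, integrable on `(0,1)`. -/
def RadialWeight (v : ℝ → ℝ) : Prop :=
  Measurable v ∧ (∀ r ∈ Set.Ico (0:ℝ) 1, 0 < v r) ∧
    MeasureTheory.IntegrableOn v (Set.Ioo 0 1)

/-- Membership in the class `D̂`. -/
def DoublingD (v : ℝ → ℝ) : Prop :=
  ∃ C : ℝ, 1 ≤ C ∧ ∀ r ∈ Set.Ico (0:ℝ) 1, hatw v r ≤ C * hatw v ((1+r)/2)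

/-- Squared Dirichlet-type norm `‖f‖_{D_v}^2`. -/
def DvSq (v : ℝ → ℝ) (f : ℂ → ℂ) : ENNReal :=
  (‖f 0‖₊ : ENNReal)^2 +
    (ENNReal.ofReal Real.pi)⁻¹ *
      ∫⁻ z in Metric.ball (0:ℂ) 1, (‖deriv f z‖₊ : ENNReal)^2 * ENNReal.ofReal (v ‖z‖)

/-- The Muckenhoupt type quantity `M₁(v)`. -/
def M1v (v : ℝ → ℝ) : ENNReal :=
  ⨆ r ∈ Set.Ioo (0:ℝ) 1,
    (∫⁻ s in Set.Ioo r 1, ENNReal.ofReal (hatw v s / (1-s)^2)) ^ (1/2 : ℝ) *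
    (∫⁻ s in Set.Ioo (0:ℝ) r, ENNReal.ofReal (1 / hatw v s)) ^ (1/2 : ℝ)

/-- The Muckenhoupt type quantity `M₂(v)`. -/
def M2v (v : ℝ → ℝ) : ENNReal :=
  ⨆ r ∈ Set.Ioo (0:ℝ) 1,
    (∫⁻ s in Set.Ioo (0:ℝ) r, ENNReal.ofReal (hatw v s / (1-s)^4)) ^ (1/2 : ℝ) *
    (∫⁻ s in Set.Ioo r 1, ENNReal.ofReal ((1-s)^2 / hatw v s)) ^ (1/2 : ℝ)

/-- The moment `v_x = ∫_0^1 s^x v(s) ds`. -/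
def vx (v : ℝ → ℝ) (x : ℕ) : ℝ := ∫ s in (0:ℝ)..1, s^x * v s

/-- `M_∞(s,f)`, the maximum of `|f|` on the circle of radius `s`. -/
def Minf (f : ℂ → ℂ) (s : ℝ) : ℝ := sSup ((fun z => ‖f z‖) '' Metric.sphere (0:ℂ) s)

/-- `M₂(r,h)`. -/
def M2mean (h : ℂ → ℂ) (r : ℝ) : ℝ :=
  Real.sqrt ((2*Real.pi)⁻¹ * ∫ θ in (-Real.pi)..Real.pi, ‖h ((r:ℂ) * Complex.exp (θ * Complex.I))‖^2)

/-- The norm of `B(2,∞)` (with values in `[0,∞]`). -/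
def B2infE (g : ℂ → ℂ) : ENNReal :=
  (‖g 0‖₊ : ENNReal) +
    ⨆ r ∈ Set.Ioo (0:ℝ) 1, ENNReal.ofReal (M2mean (deriv g) r * Real.sqrt (1-r))

/-- The `p`-th power of the norm of `B(2,p)` (with values in `[0,∞]`). -/
def B2pE (p : ℝ) (g : ℂ → ℂ) : ENNReal :=
  ENNReal.ofReal (‖g 0‖ ^ p) +
    ∫⁻ r in Set.Ioo (0:ℝ) 1, ENNReal.ofReal (M2mean (deriv g) r ^ p * (1-r)^(p/2-1))

/-- The generalized Hilbert operator `H_g`. -/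
def Hg (g f : ℂ → ℂ) (z : ℂ) : ℂ := ∫ t in Set.Ioo (0:ℝ) 1, f t * deriv g (t * z)

/-- The Hilbert operator `H` acting on functions on `[0,1)`. -/
def Hop (φ : ℝ → ℂ) (z : ℂ) : ℂ := ∫ t in Set.Ioo (0:ℝ) 1, φ t / (1 - t * z)

/-- The sublinear Hilbert operator `H̃`. -/
def Htil (φ : ℝ → ℂ) (z : ℂ) : ℂ := ∫ t in Set.Ioo (0:ℝ) 1, (‖φ t‖ : ℂ) / (1 - t * z)

/-- Squared norm in `L²_{V̂₂}`. -/
def L2V2sq (v : ℝ → ℝ) (φ : ℝ → ℂ) : ENNReal :=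
  ∫⁻ t in Set.Ioo (0:ℝ) 1, (‖φ t‖₊ : ENNReal)^2 * ENNReal.ofReal (hatw v t / (1-t)^2)

/-- Taylor coefficient `ĝ(k)` of `g` at the origin. -/
def gcoef (g : ℂ → ℂ) (k : ℕ) : ℂ := iteratedDeriv k g 0 / (Nat.factorial k)

/-!
Test the operator bound on the truncations `ψ` of `1 / V̂₂` to `(r, ρ)`, for which `∫ ψ` and
`‖ψ‖²_{L²_{V̂₂}}` are the same number `B`. Since `ψ ≥ 0` lives on `t > r`, the derivative of `H(ψ)`
dominates `B r / (1 - rx)²` on the radius `[0, 1)`, and Cauchy's formula for `(H(ψ)')²` turns this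
into a lower bound for the means of `|H(ψ)'|²` over circles. Hence `‖H(ψ)‖²_{D_v} ≳ B² (1 + J)`,
where `J` is the squared `D_v`-seminorm of `1 / (1 - rz)`; cancelling `B` and letting `ρ → 1` gives
`(1 + J) ∫_r¹ 1 / V̂₂ ≲ K²`. By Fubini the first factor of `M₂(v)²`, namely
`∫₀^r v̂(s) / (1 - s)⁴ ds`, is at most a multiple of `v̂(0) + J`, so `M₂(v) ≤ c K` with `c`
depending only on `v̂(0)`. As `0 < M₁(v) < ∞`, one may take `C = c / M₁(v)`.
-/

lemma setLIntegral_ofReal_ne_zero {X : Type*} [TopologicalSpace X] [MeasurableSpace X]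
    [OpensMeasurableSpace X] {μ : Measure X} [μ.IsOpenPosMeasure] {U : Set X} {f : X → ℝ}
    (hU : IsOpen U) (hU_ne : U.Nonempty) (hf : ContinuousOn f U) (hpos : ∀ x ∈ U, 0 < f x) :
    ∫⁻ x in U, ENNReal.ofReal (f x) ∂μ ≠ 0 := by
  rw [Ne, setLIntegral_eq_zero_iff' hU.measurableSet
    (hf.aemeasurable hU.measurableSet).ennreal_ofReal]
  refine fun h ↦ hU.measure_ne_zero μ hU_ne (measure_eq_zero_iff_ae_notMem.2 ?_)
  filter_upwards [h] with x hx hxU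
  exact (ENNReal.ofReal_pos.2 (hpos x hxU)).ne' (hx hxU)

lemma le_sq_mul_of_rpow_half_le {x y K : ENNReal} (h : x ^ (1 / 2 : ℝ) ≤ K * y ^ (1 / 2 : ℝ)) :
    x ≤ K ^ 2 * y := by
  rwa [one_div, ENNReal.rpow_inv_le_iff two_pos, ENNReal.mul_rpow_of_nonneg _ _ zero_le_two,
    ENNReal.rpow_inv_rpow two_ne_zero, ENNReal.rpow_two] at h

lemma integrableOn_Ioo_mul_of_continuousOn_Icc {𝕜 : Type*} [RCLike 𝕜] {f g : ℝ → 𝕜} {a b : ℝ}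
    (hf : IntegrableOn f (Ioo a b)) (hg : ContinuousOn g (Icc a b)) :
    IntegrableOn (fun t ↦ f t * g t) (Ioo a b) :=
  (((integrableOn_Icc_iff_integrableOn_Ioo ..).2 hf).mul_continuousOn hg isCompact_Icc).mono_set
    Ioo_subset_Icc_self

lemma lintegral_Ioo_mul_lintegral_Ioo {f w : ℝ → ENNReal} (hf : Measurable f) (hw : Measurable w)
    (a b c : ℝ) :
    ∫⁻ s in Ioo a b, f s * ∫⁻ t in Ioo s c, w t =
      ∫⁻ t in Ioo a c, (∫⁻ s in Ioo a (min b t), f s) * w t := by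
  have hkernel (s t : ℝ) : f s * (Ioi s).indicator w t = (Iio t).indicator f s * w t := by
    by_cases hst : s < t
    · rw [indicator_of_mem (mem_Ioi.2 hst), indicator_of_mem (mem_Iio.2 hst)]
    · rw [indicator_of_notMem (mt mem_Ioi.1 hst), indicator_of_notMem (mt mem_Iio.1 hst), mul_zero,
        zero_mul]
  have hmeas : Measurable (Function.uncurry fun s t ↦ (Iio t).indicator f s * w t) :=
    ((hf.comp measurable_fst).indicator (measurableSet_lt measurable_fst measurable_snd)).mul
      (hw.comp measurable_snd)
  calc ∫⁻ s in Ioo a b, f s * ∫⁻ t in Ioo s c, w t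
      = ∫⁻ s in Ioo a b, ∫⁻ t in Ioo a c, f s * (Ioi s).indicator w t := by
        refine setLIntegral_congr_fun measurableSet_Ioo fun s hs ↦ ?_
        rw [lintegral_const_mul _ (hw.indicator measurableSet_Ioi),
          setLIntegral_indicator measurableSet_Ioi, Ioi_inter_Ioo, sup_eq_left.2 hs.1.le]
    _ = ∫⁻ t in Ioo a c, ∫⁻ s in Ioo a b, (Iio t).indicator f s * w t := by
        simp only [hkernel]
        exact lintegral_lintegral_swap hmeas.aemeasurable
    _ = ∫⁻ t in Ioo a c, (∫⁻ s in Ioo a (min b t), f s) * w t := by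
        refine lintegral_congr fun t ↦ ?_
        rw [lintegral_mul_const _ (hf.indicator measurableSet_Iio),
          setLIntegral_indicator measurableSet_Iio, Iio_inter_Ioo, min_comm]

lemma lintegral_Ioo_inv_one_sub_pow_le (n : ℕ) {m : ℝ} (hm : m ∈ Ico (0 : ℝ) 1) :
    ∫⁻ s in Ioo 0 m, ENNReal.ofReal ((1 - s) ^ (n + 2))⁻¹ ≤
      ENNReal.ofReal ((1 - m) ^ (n + 1))⁻¹ := by
  have hpos {s : ℝ} (hs : s ∈ Icc 0 m) : 0 < 1 - s := sub_pos.2 (hs.2.trans_lt hm.2)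
  have hcont : ContinuousOn (fun s : ℝ ↦ ((1 - s) ^ (n + 2))⁻¹) (Icc 0 m) :=
    ContinuousOn.inv₀ (by fun_prop) fun s hs ↦ (pow_pos (hpos hs) _).ne'
  have hderiv (s : ℝ) (hs : s ∈ uIcc 0 m) :
      HasDerivAt (fun s : ℝ ↦ ((1 - s) ^ (n + 1))⁻¹ / (n + 1)) ((1 - s) ^ (n + 2))⁻¹ s := by
    have hs' := hpos (uIcc_of_le hm.1 ▸ hs)
    convert! ((((hasDerivAt_id s).const_sub 1).pow (n + 1)).inv
      (pow_pos hs' _).ne').div_const ((n : ℝ) + 1) using 1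
    simp only [Nat.cast_add, Nat.cast_one, id_eq, add_tsub_cancel_right, mul_neg, mul_one, neg_neg,
      Pi.pow_apply]
    field_simp
    ring
  have hint : IntervalIntegrable (fun s : ℝ ↦ ((1 - s) ^ (n + 2))⁻¹) volume 0 m :=
    (uIcc_of_le hm.1 ▸ hcont).intervalIntegrable
  have hnonneg : ∀ s ∈ Ioo 0 m, 0 ≤ ((1 - s) ^ (n + 2))⁻¹ := fun s hs ↦
    (inv_pos.2 (pow_pos (hpos (Ioo_subset_Icc_self hs)) _)).le
  rw [← ofReal_integral_eq_lintegral_ofReal (hcont.integrableOn_Icc.mono_set Ioo_subset_Icc_self)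
    ((ae_restrict_iff' measurableSet_Ioo).2 (ae_of_all _ hnonneg)), ← integral_Ioc_eq_integral_Ioo,
    ← intervalIntegral.integral_of_le hm.1,
    intervalIntegral.integral_eq_sub_of_hasDerivAt hderiv hint]
  have := hpos (right_mem_Icc.2 hm.1)
  refine ENNReal.ofReal_le_ofReal ((sub_le_self _ ?_).trans
    (div_le_self (by positivity) (by simp)))
  rw [sub_zero]
  positivity

lemma inv_one_sub_min_pow_three_le {r t : ℝ} (hr : r ∈ Ioo (0 : ℝ) 1) (ht : t ∈ Ioo (0 : ℝ) 1) :
    ((1 - min r t) ^ 3)⁻¹ ≤ 64 + 32 * (r ^ 2 * t / (1 - r * t) ^ 3) := by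
  obtain ⟨hr0, hr1⟩ := hr
  obtain ⟨ht0, ht1⟩ := ht
  have hrt : 0 < 1 - r * t := sub_pos.2 (mul_lt_one_of_nonneg_of_lt_one_left hr0.le hr1 ht1.le)
  have hmin : (1 - r * t) / 2 ≤ 1 - min r t := by
    rcases min_cases r t with h | h <;> nlinarith
  have hcube : ((1 - min r t) ^ 3)⁻¹ ≤ 8 / (1 - r * t) ^ 3 :=
    calc ((1 - min r t) ^ 3)⁻¹ ≤ (((1 - r * t) / 2) ^ 3)⁻¹ := by gcongr
      _ = 8 / (1 - r * t) ^ 3 := by field_simp; norm_num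
  refine hcube.trans ?_
  rcases le_total (r * t) (1 / 2) with h | h
  · have : 8 / (1 - r * t) ^ 3 ≤ 8 / (1 / 2) ^ 3 := by gcongr; linarith
    have : 0 ≤ r ^ 2 * t / (1 - r * t) ^ 3 := by positivity
    linarith
  · have hnum : 8 ≤ 32 * (r ^ 2 * t) := by nlinarith
    calc 8 / (1 - r * t) ^ 3 ≤ 32 * (r ^ 2 * t) / (1 - r * t) ^ 3 := by gcongr
      _ ≤ 64 + 32 * (r ^ 2 * t / (1 - r * t) ^ 3) := by rw [mul_div_assoc]; linarith

lemma circleAverage_eq_setIntegral_Ioo {E : Type*} [NormedAddCommGroup E] [NormedSpace ℝ E]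
    (f : ℂ → E) (c : ℂ) (R : ℝ) :
    circleAverage f c R = (2 * π)⁻¹ • ∫ θ in Ioo (-π) π, f (circleMap c R θ) := by
  rw [circleAverage_eq_integral_add (-π),
    intervalIntegral.integral_comp_add_right (fun θ ↦ f (circleMap c R θ)), zero_add,
    show 2 * π + -π = π by ring, intervalIntegral.integral_of_le (by linarith [pi_pos]),
    integral_Ioc_eq_integral_Ioo]

lemma radius_sub_norm_mul_norm_le_circleAverage {E : Type*} [NormedAddCommGroup E]
    [NormedSpace ℂ E] [CompleteSpace E] {f : ℂ → E} {c w : ℂ} {R : ℝ}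
    (hf : DiffContOnCl ℂ f (Metric.ball c R)) (hw : w ∈ Metric.ball c R) :
    (R - ‖w - c‖) * ‖f w‖ ≤ R * circleAverage (fun z ↦ ‖f z‖) c R := by
  have hR : 0 < R := Metric.pos_of_mem_ball hw
  have hd : 0 < R - ‖w - c‖ := sub_pos.2 (mem_ball_iff_norm.1 hw)
  have hcont : Continuous fun θ ↦ ‖f (circleMap c R θ)‖ := by
    refine (hf.continuousOn.comp_continuous (continuous_circleMap c R) fun θ ↦ ?_).norm
    exact closure_ball c hR.ne' ▸ circleMap_mem_closedBall c hR.le θ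
  have hcauchy := DiffContOnCl.circleAverage_smul_div (abs_of_pos hR ▸ hf) (abs_of_pos hR ▸ hw)
  have hkernel (θ : ℝ) : ‖(circleMap c R θ - c) / (circleMap c R θ - w)‖ ≤
      R / (R - ‖w - c‖) := by
    have hsub := norm_sub_norm_le (circleMap c R θ - c) (w - c)
    rw [sub_sub_sub_cancel_right, circleMap_sub_center, norm_circleMap_zero, abs_of_pos hR] at hsub
    rw [norm_div, circleMap_sub_center, norm_circleMap_zero, abs_of_pos hR]
    gcongr
  have hbound : ‖f w‖ ≤ R / (R - ‖w - c‖) * circleAverage (fun z ↦ ‖f z‖) c R := by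
    rw [← hcauchy, circleAverage_def, circleAverage_def, norm_smul, norm_inv, smul_eq_mul,
      Real.norm_of_nonneg two_pi_pos.le, mul_left_comm, ← intervalIntegral.integral_const_mul]
    gcongr
    refine intervalIntegral.norm_integral_le_of_norm_le two_pi_pos.le (ae_of_all _ fun θ _ ↦ ?_)
      ((hcont.const_mul _).intervalIntegrable _ _)
    rw [norm_smul]
    gcongr
    exact hkernel θ
  rwa [div_mul_eq_mul_div, le_div_iff₀' hd] at hbound

lemma ofReal_norm_sq_le_lintegral_circleMap {f : ℂ → ℂ} {c w : ℂ} {R : ℝ}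
    (hf : DiffContOnCl ℂ f (Metric.ball c R)) (hw : w ∈ Metric.ball c R) :
    ENNReal.ofReal (2 * π * ((R - ‖w - c‖) / R * ‖f w‖ ^ 2)) ≤
      ∫⁻ θ in Ioo (-π) π, ‖f (circleMap c R θ)‖ₑ ^ 2 := by
  have hR : 0 < R := Metric.pos_of_mem_ball hw
  have hcont : Continuous fun θ ↦ ‖f (circleMap c R θ)‖ ^ 2 := by
    refine (hf.continuousOn.comp_continuous (continuous_circleMap c R) fun θ ↦ ?_).norm.pow 2
    exact closure_ball c hR.ne' ▸ circleMap_mem_closedBall c hR.le θ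
  have hsq := radius_sub_norm_mul_norm_le_circleAverage (hf.smul hf) hw
  simp only [smul_eq_mul, norm_mul, circleAverage_eq_setIntegral_Ioo] at hsq
  simp only [← sq] at hsq
  rw [← div_le_iff₀' hR, ← div_eq_inv_mul, le_div_iff₀' two_pi_pos, mul_div_right_comm] at hsq
  calc ENNReal.ofReal (2 * π * ((R - ‖w - c‖) / R * ‖f w‖ ^ 2))
      ≤ ENNReal.ofReal (∫ θ in Ioo (-π) π, ‖f (circleMap c R θ)‖ ^ 2) :=
        ENNReal.ofReal_le_ofReal hsq
    _ = ∫⁻ θ in Ioo (-π) π, ENNReal.ofReal (‖f (circleMap c R θ)‖ ^ 2) :=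
        ofReal_integral_eq_lintegral_ofReal
          (hcont.integrableOn_Icc.mono_set Ioo_subset_Icc_self) (ae_of_all _ fun θ ↦ sq_nonneg _)
    _ = ∫⁻ θ in Ioo (-π) π, ‖f (circleMap c R θ)‖ₑ ^ 2 := by
        simp only [ENNReal.ofReal_pow (norm_nonneg _), ofReal_norm]

lemma setLIntegral_ball_eq_lintegral_circleMap {f : ℂ → ENNReal} (hf : Measurable f) (R : ℝ) :
    ∫⁻ z in Metric.ball 0 R, f z =
      ∫⁻ s in Ioo 0 R, ENNReal.ofReal s * ∫⁻ θ in Ioo (-π) π, f (circleMap 0 s θ) := by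
  have hpolar (p : ℝ × ℝ) : Complex.polarCoord.symm p = circleMap 0 p.1 p.2 := by
    rw [Complex.polarCoord_symm_apply, circleMap_zero, Complex.exp_mul_I, Complex.ofReal_cos,
      Complex.ofReal_sin]
  have hmeas : Measurable ((Metric.ball 0 R).indicator f) :=
    hf.indicator Metric.isOpen_ball.measurableSet
  calc ∫⁻ z in Metric.ball 0 R, f z
      = ∫⁻ p in Ioi 0 ×ˢ Ioo (-π) π,
          ENNReal.ofReal p.1 * (Metric.ball 0 R).indicator f (circleMap 0 p.1 p.2) := by
        rw [← lintegral_indicator Metric.isOpen_ball.measurableSet,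
          ← Complex.lintegral_comp_polarCoord_symm]
        simp only [hpolar, smul_eq_mul, polarCoord_target]
    _ = ∫⁻ s in Ioi 0, ∫⁻ θ in Ioo (-π) π,
          ENNReal.ofReal s * (Metric.ball 0 R).indicator f (circleMap 0 s θ) := by
        rw [Measure.volume_eq_prod, setLIntegral_prod]
        exact (Measurable.mul (by fun_prop) (hmeas.comp (by fun_prop))).aemeasurable
    _ = ∫⁻ s in Ioi 0, (Iio R).indicator (fun s ↦
          ENNReal.ofReal s * ∫⁻ θ in Ioo (-π) π, f (circleMap 0 s θ)) s := by
        refine setLIntegral_congr_fun measurableSet_Ioi fun s hs ↦ ?_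
        have hmem (θ : ℝ) : circleMap 0 s θ ∈ Metric.ball 0 R ↔ s ∈ Iio R := by
          rw [mem_ball_zero_iff, norm_circleMap_zero, abs_of_pos hs, mem_Iio]
        by_cases hsR : s ∈ Iio R
        · simp only [indicator_of_mem ((hmem _).2 hsR), indicator_of_mem hsR]
          exact lintegral_const_mul _ (hf.comp (by fun_prop))
        · simp only [indicator_of_notMem (mt (hmem _).1 hsR), indicator_of_notMem hsR, mul_zero,
            lintegral_zero]
    _ = _ := by rw [setLIntegral_indicator measurableSet_Iio, Iio_inter_Ioi]

lemma DvSq_eq_lintegral_circleMap {v : ℝ → ℝ} (hv : Measurable v) (f : ℂ → ℂ) :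
    DvSq v f = ‖f 0‖ₑ ^ 2 + (ENNReal.ofReal π)⁻¹ * ∫⁻ s in Ioo (0 : ℝ) 1,
      ENNReal.ofReal s * ENNReal.ofReal (v s) *
        ∫⁻ θ in Ioo (-π) π, ‖deriv f (circleMap 0 s θ)‖ₑ ^ 2 := by
  rw [DvSq, setLIntegral_ball_eq_lintegral_circleMap (by fun_prop)]
  congr 2
  refine setLIntegral_congr_fun measurableSet_Ioo fun s hs ↦ ?_
  simp only [norm_circleMap_zero, abs_of_pos hs.1, ← enorm_eq_nnnorm]
  rw [lintegral_mul_const _ (by fun_prop), mul_assoc, mul_comm (ENNReal.ofReal (v s))]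

section Hop

variable {φ : ℝ → ℂ} {ψ : ℝ → ℝ} {z : ℂ} {r t x : ℝ}

lemma one_sub_norm_le_norm_one_sub_mul (ht : t ∈ Icc (0 : ℝ) 1) (z : ℂ) :
    1 - ‖z‖ ≤ ‖1 - t * z‖ := by
  have htz : ‖t * z‖ ≤ ‖z‖ := by
    rw [norm_mul, Complex.norm_of_nonneg ht.1]
    exact mul_le_of_le_one_left (norm_nonneg z) ht.2
  linarith [norm_sub_norm_le 1 (t * z), norm_one (α := ℂ)]

lemma one_sub_mul_ne_zero (ht : t ∈ Icc (0 : ℝ) 1) (hz : ‖z‖ < 1) : 1 - t * z ≠ 0 :=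
  norm_pos_iff.1 ((sub_pos.2 hz).trans_le (one_sub_norm_le_norm_one_sub_mul ht z))

lemma continuousOn_div_one_sub_mul (hz : ‖z‖ < 1) :
    ContinuousOn (fun t : ℝ ↦ t / (1 - t * z) ^ 2) (Icc 0 1) :=
  ContinuousOn.div (by fun_prop) (by fun_prop) fun _ ht ↦ pow_ne_zero 2 (one_sub_mul_ne_zero ht hz)

lemma hasDerivAt_Hop (hφ : IntegrableOn φ (Ioo 0 1)) (hz : ‖z‖ < 1) :
    HasDerivAt (Hop φ) (∫ t in Ioo (0 : ℝ) 1, φ t * (t / (1 - t * z) ^ 2)) z := by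
  obtain ⟨ρ, hzρ, hρ⟩ := exists_between hz
  have hball : Metric.ball 0 ρ ∈ nhds z := Metric.isOpen_ball.mem_nhds (mem_ball_zero_iff.2 hzρ)
  have hint {w : ℂ} (hw : ‖w‖ < 1) : IntegrableOn (fun t : ℝ ↦ φ t / (1 - t * w)) (Ioo 0 1) := by
    simp only [div_eq_mul_inv]
    exact integrableOn_Ioo_mul_of_continuousOn_Icc hφ
      (ContinuousOn.inv₀ (by fun_prop) fun t ht ↦ one_sub_mul_ne_zero ht hw)
  refine (hasDerivAt_integral_of_dominated_loc_of_deriv_le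
    (μ := volume.restrict (Ioo 0 1)) (F := fun (w : ℂ) (t : ℝ) ↦ φ t / (1 - t * w))
    (F' := fun (w : ℂ) (t : ℝ) ↦ φ t * (t / (1 - t * w) ^ 2))
    (bound := fun t ↦ ‖φ t‖ * (1 - ρ)⁻¹ ^ 2) hball ?_ (hint hz)
    (integrableOn_Ioo_mul_of_continuousOn_Icc hφ
      (continuousOn_div_one_sub_mul hz)).aestronglyMeasurable ?_ (hφ.norm.mul_const _) ?_).2
  · filter_upwards [hball] with w hw
    exact (hint ((mem_ball_zero_iff.1 hw).trans hρ)).aestronglyMeasurable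
  · filter_upwards [ae_restrict_mem measurableSet_Ioo] with t ht w hw
    have hlower : 1 - ρ ≤ ‖1 - t * w‖ :=
      (sub_le_sub_left (mem_ball_zero_iff.1 hw).le 1).trans
        (one_sub_norm_le_norm_one_sub_mul (Ioo_subset_Icc_self ht) w)
    have := sub_pos.2 hρ
    rw [norm_mul, norm_div, norm_pow, Complex.norm_of_nonneg ht.1.le, inv_pow, ← one_div]
    gcongr
    exact ht.2.le
  · filter_upwards [ae_restrict_mem measurableSet_Ioo] with t ht w hw
    have hne := one_sub_mul_ne_zero (Ioo_subset_Icc_self ht) ((mem_ball_zero_iff.1 hw).trans hρ)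
    have hlin : HasDerivAt (fun w : ℂ ↦ 1 - t * w) (-t) w :=
      (hasDerivAt_const_mul (t : ℂ)).const_sub 1
    simpa only [div_eq_mul_inv, neg_mul, neg_neg] using (hlin.fun_inv hne).const_mul (φ t)

lemma differentiableOn_deriv_Hop (hφ : IntegrableOn φ (Ioo 0 1)) :
    DifferentiableOn ℂ (deriv (Hop φ)) (Metric.ball 0 1) :=
  DifferentiableOn.deriv (fun _ hz ↦ (hasDerivAt_Hop hφ
    (mem_ball_zero_iff.1 hz)).differentiableAt.differentiableWithinAt) Metric.isOpen_ball

lemma le_norm_deriv_Hop (hψ : IntegrableOn ψ (Ioo 0 1)) (hψ_nonneg : 0 ≤ ψ)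
    (hψ_supp : ∀ t ≤ r, ψ t = 0) (hx : x ∈ Ico (0 : ℝ) 1) :
    (∫ t in Ioo (0 : ℝ) 1, ψ t) * (r / (1 - r * x) ^ 2) ≤
      ‖deriv (Hop fun t ↦ (ψ t : ℂ)) x‖ := by
  have hx' : ‖(x : ℂ)‖ < 1 := by rw [Complex.norm_of_nonneg hx.1]; exact hx.2
  have hψ' : IntegrableOn (fun t ↦ (ψ t : ℂ)) (Ioo 0 1) := hψ.ofReal
  have hcast (t : ℝ) : (ψ t : ℂ) * (t / (1 - t * x) ^ 2) =
      ((ψ t * (t / (1 - t * x) ^ 2) : ℝ) : ℂ) := by push_cast; rfl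
  have hint : IntegrableOn (fun t ↦ ψ t * (t / (1 - t * x) ^ 2)) (Ioo 0 1) := by
    have := integrableOn_Ioo_mul_of_continuousOn_Icc hψ' (continuousOn_div_one_sub_mul hx')
    simp only [hcast] at this
    exact this.re
  rw [(hasDerivAt_Hop hψ' hx').deriv]
  simp only [hcast]
  rw [integral_complex_ofReal, Complex.norm_real, ← integral_mul_const]
  refine (setIntegral_mono_on (hψ.mul_const _) hint measurableSet_Ioo fun t ht ↦ ?_).trans
    (le_abs_self _)
  rcases le_or_gt t r with htr | hrt
  · simp only [hψ_supp t htr, zero_mul, le_refl]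
  · have htx : 0 < 1 - t * x := sub_pos.2 (mul_lt_one_of_nonneg_of_lt_one_left ht.1.le ht.2 hx.2.le)
    have := ht.1
    have := hx.1
    gcongr
    exact hψ_nonneg t

end Hop

namespace RadialWeight

variable {v : ℝ → ℝ} {s : ℝ}

lemma intervalIntegrable (hv : RadialWeight v) (hs : s ∈ Icc (0 : ℝ) 1) :
    IntervalIntegrable v volume s 1 :=
  (intervalIntegrable_iff_integrableOn_Ioo_of_le hs.2).2
    (hv.2.2.mono_set (Ioo_subset_Ioo_left hs.1))

lemma hatw_pos (hv : RadialWeight v) (hs : s ∈ Ico (0 : ℝ) 1) : 0 < hatw v s :=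
  intervalIntegral.intervalIntegral_pos_of_pos_on
    (hv.intervalIntegrable (Ico_subset_Icc_self hs))
    (fun x hx ↦ hv.2.1 x ⟨hs.1.trans hx.1.le, hx.2⟩) hs.2

lemma continuousOn_hatw (hv : RadialWeight v) : ContinuousOn (hatw v) (Icc 0 1) := by
  rw [← uIcc_of_le zero_le_one]
  refine intervalIntegral.continuousOn_primitive_interval_left ?_
  rw [uIcc_of_le zero_le_one, integrableOn_Icc_iff_integrableOn_Ioo]
  exact hv.2.2

lemma ofReal_hatw (hv : RadialWeight v) (hs : s ∈ Icc (0 : ℝ) 1) :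
    ENNReal.ofReal (hatw v s) = ∫⁻ t in Ioo s 1, ENNReal.ofReal (v t) := by
  rw [hatw, intervalIntegral.integral_of_le hs.2, integral_Ioc_eq_integral_Ioo]
  refine ofReal_integral_eq_lintegral_ofReal (hv.2.2.mono_set (Ioo_subset_Ioo_left hs.1)) ?_
  filter_upwards [ae_restrict_mem measurableSet_Ioo] with t ht
  exact (hv.2.1 t ⟨hs.1.trans ht.1.le, ht.2⟩).le

lemma continuousOn_one_sub_sq_div_hatw (hv : RadialWeight v) :
    ContinuousOn (fun t ↦ (1 - t) ^ 2 / hatw v t) (Ico 0 1) :=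
  ContinuousOn.div (by fun_prop) (hv.continuousOn_hatw.mono Ico_subset_Icc_self) fun _ ht ↦
    (hv.hatw_pos ht).ne'

end RadialWeight

lemma RadialWeight.M1v_ne_zero {v : ℝ → ℝ} (hv : RadialWeight v) : M1v v ≠ 0 := by
  have hhalf : (1 / 2 : ℝ) ∈ Ioo (0 : ℝ) 1 := by norm_num
  have hhead_sub : Ioo (0 : ℝ) (1 / 2) ⊆ Ico 0 1 := fun s hs ↦ ⟨hs.1.le, hs.2.trans hhalf.2⟩
  have htail_sub : Ioo (1 / 2 : ℝ) 1 ⊆ Ico 0 1 := fun s hs ↦ ⟨(hhalf.1.trans hs.1).le, hs.2⟩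
  have hcont : ContinuousOn (hatw v) (Ico 0 1) := hv.continuousOn_hatw.mono Ico_subset_Icc_self
  have hhead : ∫⁻ s in Ioo (0 : ℝ) (1 / 2), ENNReal.ofReal (1 / hatw v s) ≠ 0 :=
    setLIntegral_ofReal_ne_zero isOpen_Ioo (nonempty_Ioo.2 hhalf.1)
      (continuousOn_const.div (hcont.mono hhead_sub) fun _ hs ↦ (hv.hatw_pos (hhead_sub hs)).ne')
      fun _ hs ↦ one_div_pos.2 (hv.hatw_pos (hhead_sub hs))
  have htail : ∫⁻ s in Ioo (1 / 2 : ℝ) 1, ENNReal.ofReal (hatw v s / (1 - s) ^ 2) ≠ 0 :=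
    setLIntegral_ofReal_ne_zero isOpen_Ioo (nonempty_Ioo.2 hhalf.2)
      ((hcont.mono htail_sub).div (by fun_prop) fun _ hs ↦ pow_ne_zero 2 (sub_pos.2 hs.2).ne')
      fun _ hs ↦ div_pos (hv.hatw_pos (htail_sub hs)) (pow_pos (sub_pos.2 hs.2) 2)
  refine fun h ↦ mul_ne_zero ?_ ?_ (ENNReal.iSup_eq_zero.1 (ENNReal.iSup_eq_zero.1 h _) hhalf)
  · exact mt (ENNReal.rpow_eq_zero_iff_of_pos (by norm_num)).1 htail
  · exact mt (ENNReal.rpow_eq_zero_iff_of_pos (by norm_num)).1 hhead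

/-- The integral `∫₀¹ r²s / (1 - rs)³ v(s) ds`, comparable to the square of the `D_v`-seminorm of
the Cauchy kernel `z ↦ 1 / (1 - rz)`. -/
def cauchyKernelMass (v : ℝ → ℝ) (r : ℝ) : ENNReal :=
  ∫⁻ s in Ioo (0 : ℝ) 1, ENNReal.ofReal (r ^ 2 * s / (1 - r * s) ^ 3) * ENNReal.ofReal (v s)

section LowerBound

variable {ψ : ℝ → ℝ} {r : ℝ}

lemma ofReal_integral_sq_mul_le_lintegral_deriv_Hop {s : ℝ} (hψ : IntegrableOn ψ (Ioo 0 1))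
    (hψ_nonneg : 0 ≤ ψ) (hψ_supp : ∀ t ≤ r, ψ t = 0) (hr : r ∈ Ioo (0 : ℝ) 1)
    (hs : s ∈ Ioo (0 : ℝ) 1) :
    ENNReal.ofReal (π * ((∫ t in Ioo (0 : ℝ) 1, ψ t) ^ 2 * (r ^ 2 / (8 * (1 - r * s) ^ 3)))) ≤
      ∫⁻ θ in Ioo (-π) π, ‖deriv (Hop fun t ↦ (ψ t : ℂ)) (circleMap 0 s θ)‖ₑ ^ 2 := by
  obtain ⟨hr0, hr1⟩ := hr
  obtain ⟨hs0, hs1⟩ := hs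
  set F := deriv (Hop fun t ↦ (ψ t : ℂ))
  set b := ∫ t in Ioo (0 : ℝ) 1, ψ t
  have hb : 0 ≤ b := setIntegral_nonneg measurableSet_Ioo fun t _ ↦ hψ_nonneg t
  have hrs : 0 < 1 - r * s := sub_pos.2 (mul_lt_one_of_nonneg_of_lt_one_left hr0.le hr1 hs1.le)
  -- `1 / (1 - rz)` is the Szegő kernel of the circle `|z| = s` at the point `r s²`, so the circle
  -- inequality loses only a constant factor there.
  set w : ℝ := r * s ^ 2
  have hw0 : 0 ≤ w := by positivity
  have hws : w < s := by nlinarith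
  have hw_norm : ‖(w : ℂ)‖ = w := Complex.norm_of_nonneg hw0
  have hF : DiffContOnCl ℂ F (Metric.ball 0 s) :=
    (differentiableOn_deriv_Hop hψ.ofReal).diffContOnCl_ball (Metric.closedBall_subset_ball hs1)
  have hw_mem : (w : ℂ) ∈ Metric.ball 0 s := by rwa [mem_ball_zero_iff, hw_norm]
  have hkernel : r / (2 * (1 - r * s)) ^ 2 ≤ r / (1 - r * w) ^ 2 := by
    have : 0 < 1 - r * w := by nlinarith
    gcongr
    nlinarith [sq_nonneg (1 - r * s)]
  refine le_trans (ENNReal.ofReal_le_ofReal ?_) (ofReal_norm_sq_le_lintegral_circleMap hF hw_mem)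
  calc π * (b ^ 2 * (r ^ 2 / (8 * (1 - r * s) ^ 3)))
      = 2 * π * ((s - w) / s * (b * (r / (2 * (1 - r * s)) ^ 2)) ^ 2) := by
        simp only [w]; field_simp; ring
    _ ≤ 2 * π * ((s - w) / s * ‖F w‖ ^ 2) := by
        have : 0 ≤ (s - w) / s := div_nonneg (sub_nonneg.2 hws.le) hs0.le
        gcongr
        exact (mul_le_mul_of_nonneg_left hkernel hb).trans
          (le_norm_deriv_Hop hψ hψ_nonneg hψ_supp ⟨hw0, hws.trans hs1⟩)
    _ = 2 * π * ((s - ‖(w : ℂ) - 0‖) / s * ‖F w‖ ^ 2) := by rw [sub_zero, hw_norm]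

lemma ofReal_integral_sq_mul_le_DvSq_Hop {v : ℝ → ℝ} (hv : Measurable v)
    (hψ : IntegrableOn ψ (Ioo 0 1)) (hψ_nonneg : 0 ≤ ψ) (hψ_supp : ∀ t ≤ r, ψ t = 0)
    (hr : r ∈ Ioo (0 : ℝ) 1) :
    ENNReal.ofReal (∫ t in Ioo (0 : ℝ) 1, ψ t) ^ 2 * (1 + cauchyKernelMass v r / 8) ≤
      DvSq v (Hop fun t ↦ (ψ t : ℂ)) := by
  set b := ∫ t in Ioo (0 : ℝ) 1, ψ t
  have hb : 0 ≤ b := setIntegral_nonneg measurableSet_Ioo fun t _ ↦ hψ_nonneg t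
  have hzero : ‖Hop (fun t ↦ (ψ t : ℂ)) 0‖ₑ = ENNReal.ofReal b := by
    simp only [Hop, mul_zero, sub_zero, div_one]
    rw [integral_complex_ofReal, ← ofReal_norm, Complex.norm_of_nonneg hb]
  rw [DvSq_eq_lintegral_circleMap hv, hzero, mul_add, mul_one]
  refine add_le_add le_rfl ?_
  calc ENNReal.ofReal b ^ 2 * (cauchyKernelMass v r / 8)
      = ENNReal.ofReal (b ^ 2 / 8) * cauchyKernelMass v r := by
        rw [ENNReal.ofReal_div_of_pos (by norm_num), ENNReal.ofReal_pow hb, ENNReal.ofReal_ofNat]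
        simp only [div_eq_mul_inv]
        ring
    _ = ∫⁻ s in Ioo (0 : ℝ) 1, (ENNReal.ofReal π)⁻¹ * (ENNReal.ofReal s * ENNReal.ofReal (v s) *
          ENNReal.ofReal (π * (b ^ 2 * (r ^ 2 / (8 * (1 - r * s) ^ 3))))) := by
        rw [cauchyKernelMass, ← lintegral_const_mul' _ _ ENNReal.ofReal_ne_top]
        refine setLIntegral_congr_fun measurableSet_Ioo fun s hs ↦ ?_
        rw [← ENNReal.ofReal_inv_of_pos pi_pos, mul_right_comm (ENNReal.ofReal s)]
        simp only [← mul_assoc, ← ENNReal.ofReal_mul, inv_nonneg, pi_pos.le, hs.1.le]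
        rw [← ENNReal.ofReal_mul (by positivity)]
        congr 2
        field_simp
    _ ≤ ∫⁻ s in Ioo (0 : ℝ) 1, (ENNReal.ofReal π)⁻¹ * (ENNReal.ofReal s * ENNReal.ofReal (v s) *
          ∫⁻ θ in Ioo (-π) π, ‖deriv (Hop fun t ↦ (ψ t : ℂ)) (circleMap 0 s θ)‖ₑ ^ 2) := by
        refine setLIntegral_mono' measurableSet_Ioo fun s hs ↦ ?_
        gcongr
        exact ofReal_integral_sq_mul_le_lintegral_deriv_Hop hψ hψ_nonneg hψ_supp hr hs
    _ = _ := lintegral_const_mul' _ _ (ENNReal.inv_ne_top.2 (ENNReal.ofReal_pos.2 pi_pos).ne')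

end LowerBound

lemma RadialWeight.lintegral_hatw_div_le {v : ℝ → ℝ} {r : ℝ} (hv : RadialWeight v)
    (hr : r ∈ Ioo (0 : ℝ) 1) :
    ∫⁻ s in Ioo 0 r, ENNReal.ofReal (hatw v s / (1 - s) ^ 4) ≤
      64 * ENNReal.ofReal (hatw v 0) + 32 * cauchyKernelMass v r := by
  have hvm : Measurable v := hv.1
  calc ∫⁻ s in Ioo 0 r, ENNReal.ofReal (hatw v s / (1 - s) ^ 4)
      = ∫⁻ s in Ioo 0 r, ENNReal.ofReal ((1 - s) ^ 4)⁻¹ *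
          ∫⁻ t in Ioo s 1, ENNReal.ofReal (v t) := by
        refine setLIntegral_congr_fun measurableSet_Ioo fun s hs ↦ ?_
        rw [← hv.ofReal_hatw ⟨hs.1.le, (hs.2.trans hr.2).le⟩, ← ENNReal.ofReal_mul (by positivity),
          div_eq_inv_mul]
    _ = ∫⁻ t in Ioo 0 1, (∫⁻ s in Ioo 0 (min r t), ENNReal.ofReal ((1 - s) ^ 4)⁻¹) *
          ENNReal.ofReal (v t) :=
        lintegral_Ioo_mul_lintegral_Ioo (by fun_prop) (by fun_prop) 0 r 1
    _ ≤ ∫⁻ t in Ioo 0 1, (64 * ENNReal.ofReal (v t) +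
          32 * (ENNReal.ofReal (r ^ 2 * t / (1 - r * t) ^ 3) * ENNReal.ofReal (v t))) := by
        refine setLIntegral_mono' measurableSet_Ioo fun t ht ↦ ?_
        rw [← mul_assoc, ← add_mul]
        gcongr
        refine (lintegral_Ioo_inv_one_sub_pow_le 2
          ⟨le_min hr.1.le ht.1.le, min_lt_of_left_lt hr.2⟩).trans ?_
        have hrt : 0 ≤ 1 - r * t := by nlinarith [hr.1, hr.2, ht.1, ht.2]
        have := ht.1
        refine (ENNReal.ofReal_le_ofReal (inv_one_sub_min_pow_three_le hr ht)).trans_eq ?_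
        rw [ENNReal.ofReal_add (by norm_num) (by positivity), ENNReal.ofReal_mul (by norm_num),
          ENNReal.ofReal_ofNat, ENNReal.ofReal_ofNat]
    _ = 64 * ENNReal.ofReal (hatw v 0) + 32 * cauchyKernelMass v r := by
        rw [lintegral_add_left (by fun_prop), lintegral_const_mul _ (by fun_prop),
          lintegral_const_mul _ (by fun_prop), hv.ofReal_hatw (left_mem_Icc.2 zero_le_one),
          cauchyKernelMass]

/-- The function `(1 - t)² / v̂(t)` restricted to `(r, ρ)`. Since `(1 - t)² / v̂ = 1 / V̂₂`, its
integral is its squared norm in `L²_{V̂₂}`; the cut-off at `ρ < 1` makes it integrable for every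
radial weight. -/
def extremalFun (v : ℝ → ℝ) (r ρ : ℝ) : ℝ → ℝ :=
  (Ioo r ρ).indicator fun t ↦ (1 - t) ^ 2 / hatw v t

section ExtremalFun

variable {v : ℝ → ℝ} {r ρ : ℝ} (hv : RadialWeight v) (hr : 0 ≤ r) (hρ : ρ < 1)
include hv hr hρ

lemma extremalFun_nonneg : 0 ≤ extremalFun v r ρ :=
  indicator_nonneg fun _ ht ↦
    div_nonneg (sq_nonneg _) (hv.hatw_pos ⟨hr.trans ht.1.le, ht.2.trans hρ⟩).le

lemma continuousOn_Icc_one_sub_sq_div_hatw :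
    ContinuousOn (fun t ↦ (1 - t) ^ 2 / hatw v t) (Icc r ρ) :=
  hv.continuousOn_one_sub_sq_div_hatw.mono fun _ ht ↦ ⟨hr.trans ht.1, ht.2.trans_lt hρ⟩

lemma measurable_extremalFun : Measurable (extremalFun v r ρ) := by
  rw [extremalFun, ← piecewise_eq_indicator]
  exact ((continuousOn_Icc_one_sub_sq_div_hatw hv hr hρ).mono
    Ioo_subset_Icc_self).measurable_piecewise continuousOn_const measurableSet_Ioo

lemma integrable_extremalFun : Integrable (extremalFun v r ρ) :=
  ((continuousOn_Icc_one_sub_sq_div_hatw hv hr hρ).integrableOn_Icc.mono_set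
    Ioo_subset_Icc_self).integrable_indicator measurableSet_Ioo

lemma ofReal_integral_extremalFun :
    ENNReal.ofReal (∫ t in Ioo (0 : ℝ) 1, extremalFun v r ρ t) =
      ∫⁻ t in Ioo r ρ, ENNReal.ofReal ((1 - t) ^ 2 / hatw v t) := by
  rw [ofReal_integral_eq_lintegral_ofReal (integrable_extremalFun hv hr hρ).integrableOn
    (ae_of_all _ (extremalFun_nonneg hv hr hρ))]
  have hind (t : ℝ) : ENNReal.ofReal (extremalFun v r ρ t) =
      (Ioo r ρ).indicator (fun t ↦ ENNReal.ofReal ((1 - t) ^ 2 / hatw v t)) t :=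
    congr_fun (indicator_comp_of_zero ENNReal.ofReal_zero).symm t
  simp only [hind]
  rw [setLIntegral_indicator measurableSet_Ioo, inter_eq_left.2 (Ioo_subset_Ioo hr hρ.le)]

lemma L2V2sq_extremalFun :
    L2V2sq v (fun t ↦ (extremalFun v r ρ t : ℂ)) =
      ENNReal.ofReal (∫ t in Ioo (0 : ℝ) 1, extremalFun v r ρ t) := by
  rw [L2V2sq, ofReal_integral_eq_lintegral_ofReal (integrable_extremalFun hv hr hρ).integrableOn
    (ae_of_all _ (extremalFun_nonneg hv hr hρ))]
  refine setLIntegral_congr_fun measurableSet_Ioo fun t ht ↦ ?_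
  have hψ : 0 ≤ extremalFun v r ρ t := extremalFun_nonneg hv hr hρ t
  have hhat := hv.hatw_pos (Ioo_subset_Ico_self ht)
  have ht1 : 1 - t ≠ 0 := (sub_pos.2 ht.2).ne'
  simp only [← enorm_eq_nnnorm, ← ofReal_norm, Complex.norm_of_nonneg hψ]
  rw [← ENNReal.ofReal_pow hψ, ← ENNReal.ofReal_mul (sq_nonneg _)]
  congr 1
  by_cases htr : t ∈ Ioo r ρ
  · rw [extremalFun, indicator_of_mem htr]
    field_simp
  · rw [extremalFun, indicator_of_notMem htr]
    ring

end ExtremalFun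

section Boundedness

variable {v : ℝ → ℝ} {r : ℝ} {K : ENNReal} (hv : RadialWeight v)
  (hH : ∀ φ : ℝ → ℂ, Measurable φ → L2V2sq v φ < ⊤ →
    DvSq v (Hop φ) ^ (1 / 2 : ℝ) ≤ K * L2V2sq v φ ^ (1 / 2 : ℝ))
  (hr : r ∈ Ioo (0 : ℝ) 1)
include hv hH hr

lemma one_add_cauchyKernelMass_mul_lintegral_Ioo_le {ρ : ℝ} (hρ : ρ < 1) :
    (1 + cauchyKernelMass v r / 8) *
      ∫⁻ t in Ioo r ρ, ENNReal.ofReal ((1 - t) ^ 2 / hatw v t) ≤ K ^ 2 := by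
  rw [← ofReal_integral_extremalFun hv hr.1.le hρ]
  set B := ENNReal.ofReal (∫ t in Ioo (0 : ℝ) 1, extremalFun v r ρ t)
  have hnorm : L2V2sq v (fun t ↦ (extremalFun v r ρ t : ℂ)) = B :=
    L2V2sq_extremalFun hv hr.1.le hρ
  have hupper : DvSq v (Hop fun t ↦ (extremalFun v r ρ t : ℂ)) ≤ K ^ 2 * B := by
    rw [← hnorm]
    refine le_sq_mul_of_rpow_half_le (hH _ ?_ (hnorm ▸ ENNReal.ofReal_lt_top))
    exact Complex.measurable_ofReal.comp (measurable_extremalFun hv hr.1.le hρ)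
  have hlower : B ^ 2 * (1 + cauchyKernelMass v r / 8) ≤
      DvSq v (Hop fun t ↦ (extremalFun v r ρ t : ℂ)) :=
    ofReal_integral_sq_mul_le_DvSq_Hop hv.1 (integrable_extremalFun hv hr.1.le hρ).integrableOn
      (extremalFun_nonneg hv hr.1.le hρ)
      (fun t htr ↦ indicator_of_notMem (fun ht ↦ ht.1.not_ge htr) _) hr
  rcases eq_or_ne B 0 with hB | hB
  · simp only [hB, mul_zero, zero_le]
  · refine (ENNReal.mul_le_mul_iff_left hB ENNReal.ofReal_ne_top).1 ?_
    calc (1 + cauchyKernelMass v r / 8) * B * B = B ^ 2 * (1 + cauchyKernelMass v r / 8) := by ring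
      _ ≤ K ^ 2 * B := hlower.trans hupper

lemma one_add_cauchyKernelMass_mul_lintegral_Ioo_one_le :
    (1 + cauchyKernelMass v r / 8) *
      ∫⁻ t in Ioo r 1, ENNReal.ofReal ((1 - t) ^ 2 / hatw v t) ≤ K ^ 2 := by
  obtain ⟨ρ, -, hρ_lt, hρ_tendsto⟩ := exists_seq_strictMono_tendsto (1 : ℝ)
  have hcover : AECover (volume.restrict (Ioo r 1)) atTop fun n ↦ Ioo r (ρ n) :=
    aecover_Ioo_of_Ioo tendsto_const_nhds hρ_tendsto
  have hmeas : AEMeasurable (fun t ↦ (1 - t) ^ 2 / hatw v t) (volume.restrict (Ioo r 1)) :=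
    (hv.continuousOn_one_sub_sq_div_hatw.mono (Ioo_subset_Ico_self.trans
      (Ico_subset_Ico_left hr.1.le))).aemeasurable measurableSet_Ioo
  rw [← hcover.iSup_lintegral_eq_of_countably_generated hmeas.ennreal_ofReal, ENNReal.mul_iSup]
  refine iSup_le fun n ↦ ?_
  rw [Measure.restrict_restrict_of_subset (Ioo_subset_Ioo_right (hρ_lt n).le)]
  exact one_add_cauchyKernelMass_mul_lintegral_Ioo_le hv hH hr (hρ_lt n)

end Boundedness

theorem statement5_general (v : ℝ → ℝ) (hv : RadialWeight v) (K : ENNReal)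
    (hH : ∀ φ : ℝ → ℂ, Measurable φ → L2V2sq v φ < ⊤ →
      DvSq v (Hop φ) ^ (1 / 2 : ℝ) ≤ K * L2V2sq v φ ^ (1 / 2 : ℝ)) :
    M2v v ≤ ENNReal.ofReal (8 * √(hatw v 0 + 4)) * K := by
  refine iSup₂_le fun r hr ↦ ?_
  rw [← ENNReal.mul_rpow_of_nonneg _ _ (by norm_num), one_div, ENNReal.rpow_inv_le_iff two_pos,
    ENNReal.rpow_two]
  set J := cauchyKernelMass v r
  set B := ∫⁻ s in Ioo r 1, ENNReal.ofReal ((1 - s) ^ 2 / hatw v s)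
  set a := ENNReal.ofReal (hatw v 0) with ha
  have hhat : 0 ≤ hatw v 0 := (hv.hatw_pos ⟨le_rfl, one_pos⟩).le
  have hJ : 64 * a + 32 * J ≤ 64 * (a + 4) * (1 + J / 8) :=
    calc 64 * a + 32 * J = 64 * a + 256 * (J / 8) := by
          rw [show (256 : ENNReal) = 32 * 8 by norm_num, mul_assoc,
            ENNReal.mul_div_cancel (by norm_num) (by norm_num)]
      _ ≤ 64 * a + 256 * (J / 8) + (256 + 64 * a * (J / 8)) := le_self_add
      _ = 64 * (a + 4) * (1 + J / 8) := by ring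
  calc (∫⁻ s in Ioo 0 r, ENNReal.ofReal (hatw v s / (1 - s) ^ 4)) * B
      ≤ 64 * (a + 4) * (1 + J / 8) * B := by
        gcongr
        exact (hv.lintegral_hatw_div_le hr).trans hJ
    _ ≤ 64 * (a + 4) * K ^ 2 := by
        rw [mul_assoc]
        gcongr
        exact one_add_cauchyKernelMass_mul_lintegral_Ioo_one_le hv hH hr
    _ = (ENNReal.ofReal (8 * √(hatw v 0 + 4)) * K) ^ 2 := by
        rw [mul_pow, ← ENNReal.ofReal_pow (by positivity), mul_pow, sq_sqrt (by positivity),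
          ENNReal.ofReal_mul (by norm_num), ENNReal.ofReal_add hhat (by norm_num), ← ha]
        norm_num

/-- (i)⇒(iii) of Theorem 1.2: if `H : L²_{V̂₂} → D_v` is bounded with norm `K`,
then `M₂(v) < ∞`, and moreover `M₂(v) ≤ C M₁(v) K` for a constant `C = C(v)`. -/
theorem statement5 (v : ℝ → ℝ) (hv : RadialWeight v) (hD : DoublingD v)
    (hvg2 : ∫⁻ s in Set.Ioo (0:ℝ) 1, ENNReal.ofReal ((1-s)^2 / hatw v s) < ⊤)
    (hM1 : M1v v < ⊤) :
    ∃ C : ℝ, 0 < C ∧ ∀ K : ℝ, 0 < K →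
      (∀ φ : ℝ → ℂ, Measurable φ → L2V2sq v φ < ⊤ →
        (DvSq v (Hop φ)) ^ (1/2 : ℝ) ≤ ENNReal.ofReal K * (L2V2sq v φ) ^ (1/2 : ℝ)) →
      M2v v < ⊤ ∧ M2v v ≤ ENNReal.ofReal C * M1v v * ENNReal.ofReal K := by
  have hM1_pos : 0 < (M1v v).toReal := ENNReal.toReal_pos hv.M1v_ne_zero hM1.ne
  have hhat : 0 < hatw v 0 := hv.hatw_pos ⟨le_rfl, one_pos⟩
  refine ⟨8 * √(hatw v 0 + 4) / (M1v v).toReal, by positivity, fun K _ hH ↦ ?_⟩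
  have hM2 := statement5_general v hv (ENNReal.ofReal K) hH
  refine ⟨hM2.trans_lt (ENNReal.mul_lt_top ENNReal.ofReal_lt_top ENNReal.ofReal_lt_top), ?_⟩
  rwa [ENNReal.ofReal_div_of_pos hM1_pos, ENNReal.ofReal_toReal hM1.ne,
    ENNReal.div_mul_cancel hv.M1v_ne_zero hM1.ne]

end
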